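/- Let 𝒜 be a finite nonempty set and M : 𝒜 × 𝒜 → ℕ with M_{j,j} ≥ 1 for all j ∈ 𝒜. Then for every z ∈ ℍ there exists exactly one family Γ : 𝒜 → ℂ with Im Γ_j > 0 for all j ∈ 𝒜 satisfying the system of equations − 1 / Γ_j = z + Σ_{k∈𝒜} M_{j,k} Γ_k for all j ∈ 𝒜 (the system satisfied by the forward Green functions of the adjacency operator of the trees of finite cone type built from M). -/

import Mathlib

/-!
Write the system as `Γ = Φ Γ` with `Φ Γ j = -(z j + ∑ k, M j k * Γ k)⁻¹`. In the hyperbolic metric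
`w ↦ -w⁻¹` is an isometry. The estimate `dist a b ≤ r` reads
`‖a - b‖ ≤ 2 sinh (r / 2) √(Im a * Im b)`, which by Cauchy–Schwarz passes to nonnegative
combinations of points, and the translation by `z j` makes it strict. Hence `Φ` strictly decreases
the maximum of the hyperbolic distances. It maps a compact set to itself, because
`‖Φ Γ j‖ ≤ 1 / Im (z j)` always, and a bound on `Γ` bounds `Im (Φ Γ j)` away from `0`. Edelstein's
fixed point theorem applies.
-/

open Function ModularGroup
open scoped NNReal UpperHalfPlane

/-- Edelstein's fixed point theorem. The minimizer of `dist x (f x)` on `K` is fixed, since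
otherwise `f x` would be even closer to its own image. -/
theorem existsUnique_isFixedPt_of_dist_lt {X : Type*} [PseudoMetricSpace X] {f : X → X}
    (hf : Pairwise fun x y => dist (f x) (f y) < dist x y) {K : Set X} (hK : IsCompact K)
    (hne : K.Nonempty) (hfK : Set.MapsTo f K K) : ∃! x, IsFixedPt f x := by
  have hcont : Continuous f := by
    refine (LipschitzWith.mk_one fun x y => ?_).continuous
    rcases eq_or_ne x y with rfl | hxy
    · simp
    · exact (hf hxy).le
  obtain ⟨x, hxK, hmin⟩ := hK.exists_isMinOn hne (continuous_id.dist hcont).continuousOn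
  have hx : IsFixedPt f x := by
    by_contra hx
    exact (hmin (hfK hxK)).not_gt (hf (Ne.symm hx))
  refine ⟨x, hx, fun y hy => ?_⟩
  by_contra hyx
  have hlt : dist (f y) (f x) < dist y x := hf hyx
  rw [hy.eq, hx.eq] at hlt
  exact hlt.false

theorem coe_S_smul (w : ℍ) : ((S • w : ℍ) : ℂ) = -(w : ℂ)⁻¹ := by
  rw [UpperHalfPlane.modular_S_smul, UpperHalfPlane.coe_mk, inv_neg]

theorem dist_S_smul (v w : ℍ) : dist (S • v) (S • w) = dist v w :=
  dist_smul (S : Matrix.SpecialLinearGroup (Fin 2) ℝ) v w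

theorem im_S_smul (w : ℍ) : (S • w).im = w.im / ‖(w : ℂ)‖ ^ 2 := by
  rw [← UpperHalfPlane.coe_im, coe_S_smul, Complex.neg_im, Complex.inv_im, neg_div, neg_neg,
    Complex.normSq_eq_norm_sq, UpperHalfPlane.coe_im]

theorem norm_S_smul_le (w : ℍ) : ‖((S • w : ℍ) : ℂ)‖ ≤ w.im⁻¹ := by
  rw [coe_S_smul, norm_neg, norm_inv]
  exact inv_anti₀ w.im_pos ((le_abs_self _).trans (Complex.abs_im_le_norm w))

theorem isCompact_setOf_norm_coe_le_and_le_im (R : ℝ) {ε : ℝ} (hε : 0 < ε) :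
    IsCompact {w : ℍ | ‖(w : ℂ)‖ ≤ R ∧ ε ≤ w.im} := by
  have himage : ((↑) : ℍ → ℂ) '' {w : ℍ | ‖(w : ℂ)‖ ≤ R ∧ ε ≤ w.im} =
      Metric.closedBall 0 R ∩ {w | ε ≤ w.im} := by
    ext w
    constructor
    · rintro ⟨w, hw, rfl⟩
      simpa using hw
    · rintro ⟨hnorm, him⟩
      exact ⟨⟨w, hε.trans_le him⟩, ⟨mem_closedBall_zero_iff.mp hnorm, him⟩, rfl⟩
  rw [UpperHalfPlane.isEmbedding_coe.isCompact_iff, himage]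
  exact (isCompact_closedBall 0 R).inter_right
    (isClosed_le continuous_const Complex.continuous_im)

theorem dist_sum_mul_coe_le {κ : Type*} (s : Finset κ) (m : κ → ℝ≥0) {a b : κ → ℍ} {r : ℝ}
    (hr : 0 ≤ r) (hab : ∀ k ∈ s, dist (a k) (b k) ≤ r) :
    dist (∑ k ∈ s, (m k : ℂ) * a k) (∑ k ∈ s, (m k : ℂ) * b k) ≤
      2 * Real.sinh (r / 2) *
        (√(∑ k ∈ s, m k * (a k).im) * √(∑ k ∈ s, m k * (b k).im)) := by
  have hterm (k) (hk : k ∈ s) : dist ((m k : ℂ) * a k) (m k * b k) ≤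
      2 * Real.sinh (r / 2) * (√(m k * (a k).im) * √(m k * (b k).im)) := by
    have hdist := UpperHalfPlane.dist_le_iff_le_sinh.mp (hab k hk)
    rw [div_le_iff₀ (by positivity)] at hdist
    calc dist ((m k : ℂ) * a k) (m k * b k) = m k * dist (a k : ℂ) (b k) := by
          rw [dist_eq_norm, ← mul_sub, norm_mul, ← dist_eq_norm]
          simp
      _ ≤ m k * (Real.sinh (r / 2) * (2 * √((a k).im * (b k).im))) := by gcongr
      _ = 2 * Real.sinh (r / 2) * (√(m k * (a k).im) * √(m k * (b k).im)) := by
          rw [← Real.sqrt_mul (by positivity), mul_mul_mul_comm,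
            Real.sqrt_mul (mul_self_nonneg _), Real.sqrt_mul_self (by positivity)]
          ring
  calc dist (∑ k ∈ s, (m k : ℂ) * a k) (∑ k ∈ s, (m k : ℂ) * b k)
      ≤ ∑ k ∈ s, 2 * Real.sinh (r / 2) * (√(m k * (a k).im) * √(m k * (b k).im)) :=
        dist_sum_sum_le_of_le s hterm
    _ ≤ 2 * Real.sinh (r / 2) *
        (√(∑ k ∈ s, m k * (a k).im) * √(∑ k ∈ s, m k * (b k).im)) := by
        rw [← Finset.mul_sum]
        gcongr
        exact Real.sum_sqrt_mul_sqrt_le s (fun k => by positivity) fun k => by positivity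

section AddWeightedSum

variable {κ : Type*} [Fintype κ] (z : ℍ) (m : κ → ℝ≥0)

/-- The right-hand side `z + ∑ k, m k * Γ k` of the recursion. Nonnegative weights keep it in the
upper half-plane, so it is bundled as a point of `ℍ`, where the hyperbolic metric is available. -/
noncomputable def addWeightedSum (Γ : κ → ℍ) : ℍ where
  coe := z + ∑ k, (m k : ℂ) * Γ k
  coe_im_pos := by
    simp only [Complex.add_im, Complex.im_sum, Complex.im_ofReal_mul, UpperHalfPlane.coe_im]
    positivity

theorem coe_addWeightedSum (Γ : κ → ℍ) :
    (addWeightedSum z m Γ : ℂ) = z + ∑ k, (m k : ℂ) * Γ k :=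
  rfl

theorem im_addWeightedSum (Γ : κ → ℍ) :
    (addWeightedSum z m Γ).im = z.im + ∑ k, m k * (Γ k).im := by
  simp [← UpperHalfPlane.coe_im, coe_addWeightedSum]

theorem im_le_im_addWeightedSum (Γ : κ → ℍ) : z.im ≤ (addWeightedSum z m Γ).im := by
  rw [im_addWeightedSum]
  exact le_add_of_nonneg_right (by positivity)

theorem norm_addWeightedSum_le {Γ : κ → ℍ} {R : κ → ℝ} (hΓ : ∀ k, ‖(Γ k : ℂ)‖ ≤ R k) :
    ‖(addWeightedSum z m Γ : ℂ)‖ ≤ ‖(z : ℂ)‖ + ∑ k, m k * R k := by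
  refine norm_add_le_of_le le_rfl (norm_sum_le_of_le _ fun k _ => ?_)
  rw [norm_mul, Complex.norm_real, NNReal.norm_eq]
  gcongr
  exact hΓ k

theorem dist_addWeightedSum_lt {a b : κ → ℍ} {r : ℝ} (hr : 0 < r)
    (hab : ∀ k, dist (a k) (b k) ≤ r) :
    dist (addWeightedSum z m a) (addWeightedSum z m b) < r := by
  set A := ∑ k, m k * (a k).im
  set B := ∑ k, m k * (b k).im
  have hA : 0 ≤ A := by positivity
  have hB : 0 ≤ B := by positivity
  have hAz : √A < √(z.im + A) := Real.sqrt_lt_sqrt hA (lt_add_of_pos_left A z.im_pos)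
  have hBz : √B < √(z.im + B) := Real.sqrt_lt_sqrt hB (lt_add_of_pos_left B z.im_pos)
  suffices h : Real.sinh (dist (addWeightedSum z m a) (addWeightedSum z m b) / 2) <
      Real.sinh (r / 2) by
    linarith [Real.sinh_lt_sinh.mp h]
  rw [UpperHalfPlane.sinh_half_dist, div_lt_iff₀ (by positivity), im_addWeightedSum,
    im_addWeightedSum, coe_addWeightedSum, coe_addWeightedSum, dist_add_left]
  calc dist (∑ k, (m k : ℂ) * a k) (∑ k, (m k : ℂ) * b k)
      ≤ 2 * Real.sinh (r / 2) * (√A * √B) :=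
        dist_sum_mul_coe_le _ m hr.le fun k _ => hab k
    _ < 2 * Real.sinh (r / 2) * (√(z.im + A) * √(z.im + B)) := by
        gcongr
    _ = Real.sinh (r / 2) * (2 * √((z.im + A) * (z.im + B))) := by
        rw [Real.sqrt_mul (by positivity)]
        ring

end AddWeightedSum

section GreenMap

variable {𝒜 : Type*} [Fintype 𝒜] (M : 𝒜 → 𝒜 → ℝ≥0) (z : 𝒜 → ℍ)

/-- The self-map `Γ ↦ (j ↦ -(z j + ∑ k, M j k * Γ k)⁻¹)` of `𝒜 → ℍ`, whose fixed points are the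
solutions of the recursion. The inversion `w ↦ -w⁻¹` is encoded as the action of the modular
matrix `S`. -/
noncomputable def greenMap (Γ : 𝒜 → ℍ) (j : 𝒜) : ℍ :=
  S • addWeightedSum (z j) (M j) Γ

theorem isFixedPt_greenMap_iff {Γ : 𝒜 → ℍ} :
    IsFixedPt (greenMap M z) Γ ↔
      ∀ j, -(1 / (Γ j : ℂ)) = z j + ∑ k, (M j k : ℂ) * Γ k := by
  refine funext_iff.trans (forall_congr' fun j => ?_)
  rw [greenMap, ← UpperHalfPlane.coe_inj, coe_S_smul, coe_addWeightedSum, one_div,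
    neg_eq_iff_eq_neg, inv_eq_iff_eq_inv, inv_neg, eq_comm]

theorem pairwise_dist_greenMap_lt :
    Pairwise fun Γ Γ' => dist (greenMap M z Γ) (greenMap M z Γ') < dist Γ Γ' :=
  fun Γ Γ' hne => (dist_pi_lt_iff (dist_pos.mpr hne)).mpr fun j => by
    rw [greenMap, greenMap, dist_S_smul]
    exact dist_addWeightedSum_lt (z j) (M j) (dist_pos.mpr hne) (dist_le_pi_dist Γ Γ')

theorem norm_greenMap_le (Γ : 𝒜 → ℍ) (j : 𝒜) : ‖(greenMap M z Γ j : ℂ)‖ ≤ (z j).im⁻¹ :=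
  (norm_S_smul_le _).trans (inv_anti₀ (z j).im_pos (im_le_im_addWeightedSum (z j) (M j) Γ))

theorem le_im_greenMap {Γ : 𝒜 → ℍ} {R : 𝒜 → ℝ} (hΓ : ∀ k, ‖(Γ k : ℂ)‖ ≤ R k) (j : 𝒜) :
    (z j).im / (‖(z j : ℂ)‖ + ∑ k, M j k * R k) ^ 2 ≤ (greenMap M z Γ j).im := by
  have : 0 < ‖(addWeightedSum (z j) (M j) Γ : ℂ)‖ :=
    norm_pos_iff.mpr (UpperHalfPlane.ne_zero _)
  rw [greenMap, im_S_smul]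
  gcongr
  · exact im_le_im_addWeightedSum (z j) (M j) Γ
  · exact norm_addWeightedSum_le (z j) (M j) hΓ

theorem exists_isCompact_mapsTo_greenMap :
    ∃ K : Set (𝒜 → ℍ), IsCompact K ∧ K.Nonempty ∧ Set.MapsTo (greenMap M z) K K := by
  let R (j : 𝒜) : ℝ := (z j).im⁻¹
  let ε (j : 𝒜) : ℝ := (z j).im / (‖(z j : ℂ)‖ + ∑ k, M j k * R k) ^ 2
  have hε (j : 𝒜) : 0 < ε j := by
    have hz : 0 < ‖(z j : ℂ)‖ := norm_pos_iff.mpr (z j).ne_zero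
    positivity
  let K : Set (𝒜 → ℍ) := Set.univ.pi fun j => {w | ‖(w : ℂ)‖ ≤ R j ∧ ε j ≤ w.im}
  have hmem {Γ : 𝒜 → ℍ} (hΓ : ∀ j, ‖(Γ j : ℂ)‖ ≤ R j) : greenMap M z Γ ∈ K := fun j _ =>
    ⟨norm_greenMap_le M z Γ j, le_im_greenMap M z hΓ j⟩
  exact ⟨K, isCompact_univ_pi fun j => isCompact_setOf_norm_coe_le_and_le_im (R j) (hε j),
    ⟨_, hmem (norm_greenMap_le M z default)⟩, fun Γ hΓ => hmem fun j => (hΓ j trivial).1⟩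

theorem existsUnique_isFixedPt_greenMap : ∃! Γ, IsFixedPt (greenMap M z) Γ :=
  let ⟨_, hK, hne, hmaps⟩ := exists_isCompact_mapsTo_greenMap M z
  existsUnique_isFixedPt_of_dist_lt (pairwise_dist_greenMap_lt M z) hK hne hmaps

end GreenMap

theorem green_recursion_existsUnique_general {𝒜 : Type*} [Fintype 𝒜]
    (M : 𝒜 → 𝒜 → ℝ≥0) (z : 𝒜 → ℂ) (hz : ∀ j, 0 < (z j).im) :
    ∃! Γ : 𝒜 → ℂ, (∀ j, 0 < (Γ j).im) ∧
      ∀ j, -(1 / Γ j) = z j + ∑ k, (M j k : ℂ) * Γ k := by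
  lift z to 𝒜 → ℍ using hz
  obtain ⟨Γ, hΓ, huniq⟩ := existsUnique_isFixedPt_greenMap M z
  refine ⟨fun j => Γ j, ⟨fun j => (Γ j).im_pos, (isFixedPt_greenMap_iff M z).mp hΓ⟩, ?_⟩
  rintro Γ' ⟨him, heq⟩
  lift Γ' to 𝒜 → ℍ using him
  rw [huniq Γ' ((isFixedPt_greenMap_iff M z).mpr heq)]

/-- For each `z` in the upper half-plane there is exactly one family `Γ` of
upper half-plane values satisfying the recursion formula for the forward
Green functions of the trees of finite cone type built from `M`. -/
theorem green_recursion_existsUnique {𝒜 : Type*} [Fintype 𝒜] [Nonempty 𝒜]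
    (M : 𝒜 → 𝒜 → ℕ) (hM : ∀ j, 1 ≤ M j j) (z : ℂ) (hz : 0 < z.im) :
    ∃! Γ : 𝒜 → ℂ, (∀ j, 0 < (Γ j).im) ∧
      ∀ j, -(1 / Γ j) = z + ∑ k, (M j k : ℂ) * Γ k := by
  simpa using green_recursion_existsUnique_general (fun j k => (M j k : ℝ≥0)) _ fun _ => hz
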